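/- Consider the inverted pendulum cart on a planar roller coaster: configuration variables (x¹,x²) = (φ,s), mass matrix g₁₁ = 1, g₁₂ = g₂₁ = b sin(α(s) − φ), g₂₂ = 1, where α : ℝ → ℝ is smooth and 0 < b < 1 (this is the case sin²α = n₃²). Let U ⊆ {(φ,s) : cos(α(s) − φ) ≠ 0} be open. A smooth λ = (λ¹,λ²) : U → ℝ² satisfies the λ-equations ∂(g_{1i}λ^i)/∂x^k − 2[k1,i]λ^i = 0 (k = 1,2) if and only if the function ν := λ¹ + b sin(α(s) − φ)λ² satisfies ∂ν/∂s = 0 and λ² = −(∂ν/∂φ)/(2b cos(α(s) − φ)); in that case λ¹ = ν + (1/2) tan(α(s) − φ) ∂ν/∂φ. -/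

import Mathlib

/-- Partial derivative in the `k`-th coordinate direction. -/
noncomputable def pd {n : ℕ} (k : Fin n) (f : (Fin n → ℝ) → ℝ) (x : Fin n → ℝ) : ℝ :=
  fderiv ℝ f x (Pi.single k 1)

/-- Christoffel symbol of the first kind `[ij,k]` of the matrix-valued map `g`. -/
noncomputable def chr {n : ℕ} (g : (Fin n → ℝ) → Matrix (Fin n) (Fin n) ℝ)
    (i j k : Fin n) (x : Fin n → ℝ) : ℝ :=
  (1/2) * (pd i (fun y => g y j k) x + pd j (fun y => g y i k) x - pd k (fun y => g y i j) x)

/-- Mass matrix of the inverted pendulum cart on a planar roller coaster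
(the case `sin²α = n₃²`); coordinates `(x¹, x²) = (φ, s)`. -/
noncomputable def gCoaster (b : ℝ) (α : ℝ → ℝ) (x : Fin 2 → ℝ) : Matrix (Fin 2) (Fin 2) ℝ :=
  !![1, b * Real.sin (α (x 1) - x 0);
     b * Real.sin (α (x 1) - x 0), 1]

/-- `ν = λ¹ + b sin(α(s) − φ) λ²` for the planar roller coaster. -/
noncomputable def nuCoaster (b : ℝ) (α : ℝ → ℝ) (lam : (Fin 2 → ℝ) → Fin 2 → ℝ)
    (x : Fin 2 → ℝ) : ℝ :=
  lam x 0 + b * Real.sin (α (x 1) - x 0) * lam x 1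

lemma pd_const' (k : Fin 2) (c : ℝ) (x : Fin 2 → ℝ) : pd k (fun _ => c) x = 0 := by
  simp [pd]

lemma pd_sin_phi (b : ℝ) (α : ℝ → ℝ) (hα : ContDiff ℝ (⊤ : ℕ∞) α) (x : Fin 2 → ℝ) :
    pd 0 (fun y : Fin 2 → ℝ => b * Real.sin (α (y 1) - y 0)) x
      = -(b * Real.cos (α (x 1) - x 0)) := by
  have hd : HasDerivAt α (deriv α (x 1)) (x 1) :=
    ((hα.differentiable (by simp)) (x 1)).hasDerivAt
  have h0 : HasFDerivAt (fun y : Fin 2 → ℝ => y 0)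
    (ContinuousLinearMap.proj (R := ℝ) (φ := fun _ : Fin 2 => ℝ) 0) x := hasFDerivAt_apply 0 x
  have h1 : HasFDerivAt (fun y : Fin 2 → ℝ => y 1)
    (ContinuousLinearMap.proj (R := ℝ) (φ := fun _ : Fin 2 => ℝ) 1) x := hasFDerivAt_apply 1 x
  have h2 := (((hd.comp_hasFDerivAt x h1).sub h0).sin).const_mul b
  have h3 := h2.fderiv
  unfold pd
  refine (congrArg (fun L => L (Pi.single 0 1)) h3).trans ?_
  simp

lemma coaster_eqs (b : ℝ) (α : ℝ → ℝ) (hα : ContDiff ℝ (⊤ : ℕ∞) α)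
    (lam : (Fin 2 → ℝ) → Fin 2 → ℝ) (x : Fin 2 → ℝ) :
    (∀ k : Fin 2, pd k (fun y => ∑ i, gCoaster b α y 0 i * lam y i) x
          - 2 * ∑ i, chr (gCoaster b α) k 0 i x * lam x i = 0) ↔
    (pd 0 (nuCoaster b α lam) x + 2 * b * Real.cos (α (x 1) - x 0) * lam x 1 = 0 ∧
      pd 1 (nuCoaster b α lam) x = 0) := by
  have hn : (fun y => ∑ i, gCoaster b α y 0 i * lam y i) = nuCoaster b α lam := by
    funext y
    simp [gCoaster, nuCoaster, Fin.sum_univ_two]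
  rw [hn, Fin.forall_fin_two]
  have hp := pd_sin_phi b α hα x
  simp only [Fin.sum_univ_two, chr, gCoaster, Matrix.of_apply, Matrix.cons_val_zero,
    Matrix.cons_val_one, Matrix.cons_val', Matrix.cons_val_fin_one, pd_const', hp]
  constructor
  · rintro ⟨h1, h2⟩
    constructor <;> linarith
  · rintro ⟨h1, h2⟩
    constructor <;> linarith

/-- Characterization of the solutions of the λ-equations for the inverted
pendulum cart on a planar roller coaster (Case 1, `sin²α = n₃²`). -/
theorem planar_coaster_lambda_characterization
    (b : ℝ) (hb0 : 0 < b) (hb1 : b < 1)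
    (α : ℝ → ℝ) (hα : ContDiff ℝ (⊤ : ℕ∞) α)
    (U : Set (Fin 2 → ℝ)) (hUopen : IsOpen U)
    (hU : U ⊆ {x : Fin 2 → ℝ | Real.cos (α (x 1) - x 0) ≠ 0})
    (lam : (Fin 2 → ℝ) → Fin 2 → ℝ)
    (hlam : ∀ i, ContDiffOn ℝ (⊤ : ℕ∞) (fun x => lam x i) U) :
    -- λ satisfies the λ-equations iff ∂ν/∂s = 0 and the formula for λ²
    ((∀ x ∈ U, ∀ k : Fin 2,
        pd k (fun y => ∑ i, gCoaster b α y 0 i * lam y i) x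
          - 2 * ∑ i, chr (gCoaster b α) k 0 i x * lam x i = 0)
      ↔
      (∀ x ∈ U,
        pd 1 (nuCoaster b α lam) x = 0 ∧
        lam x 1 = -(pd 0 (nuCoaster b α lam) x) / (2 * b * Real.cos (α (x 1) - x 0)))) ∧
    -- in that case λ¹ = ν + (1/2) tan(α − φ) ∂ν/∂φ
    ((∀ x ∈ U, ∀ k : Fin 2,
        pd k (fun y => ∑ i, gCoaster b α y 0 i * lam y i) x
          - 2 * ∑ i, chr (gCoaster b α) k 0 i x * lam x i = 0) →
      ∀ x ∈ U, lam x 0 = nuCoaster b α lam x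
          + (1/2) * Real.tan (α (x 1) - x 0) * pd 0 (nuCoaster b α lam) x) := by
  have key : ∀ x ∈ U, (∀ k : Fin 2, pd k (fun y => ∑ i, gCoaster b α y 0 i * lam y i) x
          - 2 * ∑ i, chr (gCoaster b α) k 0 i x * lam x i = 0) ↔
      (pd 1 (nuCoaster b α lam) x = 0 ∧
        lam x 1 = -(pd 0 (nuCoaster b α lam) x) / (2 * b * Real.cos (α (x 1) - x 0))) := by
    intro x hx
    have hc : Real.cos (α (x 1) - x 0) ≠ 0 := hU hx
    have hne : 2 * b * Real.cos (α (x 1) - x 0) ≠ 0 := by positivity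
    rw [coaster_eqs b α hα, eq_div_iff hne]
    constructor
    · rintro ⟨h1, h2⟩
      exact ⟨h2, by linarith⟩
    · rintro ⟨h1, h2⟩
      exact ⟨by linarith, h1⟩
  refine ⟨forall₂_congr key, fun h x hx => ?_⟩
  have hc : Real.cos (α (x 1) - x 0) ≠ 0 := hU hx
  obtain ⟨h1, -⟩ := (coaster_eqs b α hα lam x).1 (h x hx)
  have h2 : pd 0 (nuCoaster b α lam) x = -(2 * b * Real.cos (α (x 1) - x 0) * lam x 1) := by
    linarith
  rw [h2, Real.tan_eq_sin_div_cos, nuCoaster]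
  field_simp
  ring
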